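/- arXiv:1503.04048 — 2 statements merged into one kernel-verified Lean document; each statement's English description precedes it below -/
import Mathlib

section
/- Let D be a digraph of order n and let l(D) denote the length (number of arcs) of a longest directed path in D. Then γ_oso(D) ≤ n − ⌊(l(D)+1)/3⌋. -/
/-!
Cut a longest directed path into `⌊(l(D) + 1) / 3⌋` disjoint pieces `a → b → c` and let `S` consist
of all vertices except the ends `c`. Each missing vertex `c` is guarded by its own `b`. Moving the
guard from `b` to `c` leaves every other missing vertex guarded, because distinct pieces have
distinct middle vertices, and the vacated vertex `b` is out-dominated by `a`, which lies in `S`.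
-/

open Finset

variable {V : Type*}

/-- `S` is an out-dominating set of the digraph with arc relation `A`. -/
def OutDom (A : V → V → Prop) (S : Finset V) : Prop :=
  ∀ v : V, v ∉ S → ∃ u ∈ S, A u v

/-- `S` is an in-dominating set. -/
def InDom (A : V → V → Prop) (S : Finset V) : Prop :=
  ∀ v : V, v ∉ S → ∃ u ∈ S, A v u

/-- `S` is a dominating set of the underlying undirected graph of the digraph `A`. -/
def DomG (A : V → V → Prop) (S : Finset V) : Prop :=
  ∀ v : V, v ∉ S → ∃ u ∈ S, A u v ∨ A v u

/-- Secure dominating set of the underlying undirected graph. -/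
def SDS [DecidableEq V] (A : V → V → Prop) (S : Finset V) : Prop :=
  DomG A S ∧ ∀ v : V, v ∉ S → ∃ u ∈ S, (A u v ∨ A v u) ∧ DomG A (insert v (S.erase u))

/-- Out-secure dominating set (OSDS). -/
def OSDS [DecidableEq V] (A : V → V → Prop) (S : Finset V) : Prop :=
  DomG A S ∧ ∀ v : V, v ∉ S → ∃ u ∈ S, A u v ∧ DomG A (insert v (S.erase u))

/-- Secure out-dominating set (SODS). -/
def SODS [DecidableEq V] (A : V → V → Prop) (S : Finset V) : Prop :=
  OutDom A S ∧ ∀ v : V, v ∉ S → ∃ u ∈ S, (A v u ∨ A u v) ∧ OutDom A (insert v (S.erase u))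

/-- Out-secure out-dominating set (OSODS). -/
def OSODS [DecidableEq V] (A : V → V → Prop) (S : Finset V) : Prop :=
  OutDom A S ∧ ∀ v : V, v ∉ S → ∃ u ∈ S, A u v ∧ OutDom A (insert v (S.erase u))

/-- In-secure out-dominating set (ISODS). -/
def ISODS [DecidableEq V] (A : V → V → Prop) (S : Finset V) : Prop :=
  OutDom A S ∧ ∀ v : V, v ∉ S → ∃ u ∈ S, A v u ∧ OutDom A (insert v (S.erase u))

/-- Twin dominating set. -/
def TwinDom (A : V → V → Prop) (S : Finset V) : Prop :=
  ∀ v : V, v ∉ S → (∃ u ∈ S, A v u) ∧ (∃ u ∈ S, A u v)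

/-- The out-domination number `γ⁺`. -/
noncomputable def gammaPlus [Fintype V] (A : V → V → Prop) : ℕ :=
  sInf {k | ∃ S : Finset V, OutDom A S ∧ S.card = k}

/-- The in-domination number `γ⁻`. -/
noncomputable def gammaMinus [Fintype V] (A : V → V → Prop) : ℕ :=
  sInf {k | ∃ S : Finset V, InDom A S ∧ S.card = k}

/-- The secure domination number of the underlying undirected graph, `γ_s`. -/
noncomputable def gammaS [Fintype V] [DecidableEq V] (A : V → V → Prop) : ℕ :=
  sInf {k | ∃ S : Finset V, SDS A S ∧ S.card = k}

/-- The out-secure domination number `γ_os`. -/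
noncomputable def gammaOS [Fintype V] [DecidableEq V] (A : V → V → Prop) : ℕ :=
  sInf {k | ∃ S : Finset V, OSDS A S ∧ S.card = k}

/-- The secure out-domination number `γ_so`. -/
noncomputable def gammaSO [Fintype V] [DecidableEq V] (A : V → V → Prop) : ℕ :=
  sInf {k | ∃ S : Finset V, SODS A S ∧ S.card = k}

/-- The out-secure out-domination number `γ_oso`. -/
noncomputable def gammaOSO [Fintype V] [DecidableEq V] (A : V → V → Prop) : ℕ :=
  sInf {k | ∃ S : Finset V, OSODS A S ∧ S.card = k}

/-- The in-secure out-domination number `γ_iso`. -/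
noncomputable def gammaISO [Fintype V] [DecidableEq V] (A : V → V → Prop) : ℕ :=
  sInf {k | ∃ S : Finset V, ISODS A S ∧ S.card = k}

/-- The twin domination number `γ*`. -/
noncomputable def gammaTwin [Fintype V] (A : V → V → Prop) : ℕ :=
  sInf {k | ∃ S : Finset V, TwinDom A S ∧ S.card = k}

/-- Out-degree `d⁺(u)`. -/
noncomputable def outDeg (A : V → V → Prop) (u : V) : ℕ := Nat.card {v | A u v}

/-- In-degree `d⁻(u)`. -/
noncomputable def inDeg (A : V → V → Prop) (u : V) : ℕ := Nat.card {v | A v u}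

/-- Maximum out-degree `Δ⁺`. -/
noncomputable def maxOutDeg [Fintype V] (A : V → V → Prop) : ℕ :=
  Finset.univ.sup fun u => outDeg A u

/-- Minimum out-degree `δ⁺`. -/
noncomputable def minOutDeg (A : V → V → Prop) : ℕ := sInf (Set.range fun u => outDeg A u)

/-- Minimum in-degree `δ⁻`. -/
noncomputable def minInDeg (A : V → V → Prop) : ℕ := sInf (Set.range fun u => inDeg A u)

/-- The set of out-private neighbors `pn⁺(u,S)`: vertices `w` with `N⁻[w] ∩ S = {u}`. -/
def pnPlus (A : V → V → Prop) (S : Finset V) (u : V) : Set V :=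
  {w | {x | A x w ∨ x = w} ∩ ↑S = {u}}

/-- The set of in-private neighbors `pn⁻(u,S)`: vertices `w` with `N⁺[w] ∩ S = {u}`. -/
def pnMinus (A : V → V → Prop) (S : Finset V) (u : V) : Set V :=
  {w | {x | A w x ∨ x = w} ∩ ↑S = {u}}

/-- `A` is an orientation of the simple graph `G`. -/
def IsOrientation (G : SimpleGraph V) (A : V → V → Prop) : Prop :=
  (∀ u v : V, G.Adj u v ↔ (A u v ∨ A v u)) ∧ (∀ u v : V, A u v → ¬ A v u)

/-- The arc relation of the directed path `P_n` on `Fin n`. -/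
def pathArc (n : ℕ) : Fin n → Fin n → Prop := fun i j => (i : ℕ) + 1 = (j : ℕ)

/-- The arc relation of the directed cycle `C_n` on `Fin n`. -/
def cycleArc (n : ℕ) : Fin n → Fin n → Prop := fun i j => ((i : ℕ) + 1) % n = (j : ℕ)

/-- The length `l(D)` of a longest directed path in the digraph `A`. -/
noncomputable def longestPathLen [Fintype V] (A : V → V → Prop) : ℕ :=
  sSup {k | ∃ p : Fin (k + 1) → V, Function.Injective p ∧
    ∀ i : Fin k, A (p i.castSucc) (p i.succ)}

section

variable {A : V → V → Prop}

/-- A directed path with `k` arcs, given by its sequence of `k + 1` vertices. -/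
def IsDirectedPath (A : V → V → Prop) {k : ℕ} (p : Fin (k + 1) → V) : Prop :=
  Function.Injective p ∧ ∀ i : Fin k, A (p i.castSucc) (p i.succ)

/-- A family of pairwise vertex-disjoint directed paths with `k` arcs each. Injectivity of the
uncurried family says both that no path repeats a vertex and that no two paths share one. -/
structure IsPathPacking (A : V → V → Prop) {ι : Type*} {k : ℕ} (P : ι → Fin (k + 1) → V) :
    Prop where
  injective : Function.Injective (Function.uncurry P)
  arc : ∀ i (r : Fin k), A (P i r.castSucc) (P i r.succ)

lemma IsDirectedPath.length_lt_card [Fintype V] {k : ℕ} {p : Fin (k + 1) → V}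
    (hp : IsDirectedPath A p) : k < Fintype.card V := by
  simpa using Fintype.card_le_of_injective p hp.1

lemma exists_isDirectedPath_longestPathLen [Fintype V] [Nonempty V] (A : V → V → Prop) :
    ∃ p : Fin (longestPathLen A + 1) → V, IsDirectedPath A p := by
  obtain ⟨v⟩ := ‹Nonempty V›
  have trivial_path : IsDirectedPath A (fun _ : Fin (0 + 1) => v) :=
    ⟨Function.injective_of_subsingleton (α := Fin 1) _, fun i => i.elim0⟩
  exact Nat.sSup_mem (s := {k | ∃ p : Fin (k + 1) → V, IsDirectedPath A p}) ⟨0, _, trivial_path⟩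
    ⟨Fintype.card V, fun _ ⟨_, hp⟩ => hp.length_lt_card.le⟩

lemma IsDirectedPath.exists_isPathPacking {l m k : ℕ} {p : Fin (l + 1) → V}
    (hp : IsDirectedPath A p) (hm : m * (k + 1) ≤ l + 1) :
    ∃ P : Fin m → Fin (k + 1) → V, IsPathPacking A P := by
  refine ⟨fun i r => p (Fin.castLE hm (finProdFinEquiv (i, r))), ?_, fun i r => ?_⟩
  · exact hp.1.comp ((Fin.castLE_injective hm).comp finProdFinEquiv.injective)
  · have index_lt : r.val + (k + 1) * i.val < l := by
      have := (Fin.castLE hm (finProdFinEquiv (i, r.succ))).isLt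
      simp only [Fin.val_castLE, finProdFinEquiv_apply_val, Fin.val_succ] at this
      omega
    have index_succ : Fin.castLE hm (finProdFinEquiv (i, r.succ)) =
        Fin.succ ⟨r.val + (k + 1) * i.val, index_lt⟩ := by
      ext
      simp only [Fin.val_castLE, finProdFinEquiv_apply_val, Fin.val_succ]
      omega
    simp only [index_succ]
    exact hp.2 ⟨r.val + (k + 1) * i.val, index_lt⟩

variable [DecidableEq V] {S : Finset V}

lemma outDom_insert_erase {u v : V} (hu : ∃ x ∈ S.erase u, A x u)
    (hS : ∀ w ∉ S, w ≠ v → ∃ x ∈ S.erase u, A x w) : OutDom A (insert v (S.erase u)) := by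
  intro w hw
  obtain ⟨hwv, hwS⟩ : w ≠ v ∧ w ∉ S.erase u := by simpa only [mem_insert, not_or] using hw
  obtain ⟨x, hx, hxw⟩ : ∃ x ∈ S.erase u, A x w := by
    by_cases hwu : w = u
    · exact hwu ▸ hu
    · exact hS w (fun h => hwS (mem_erase.2 ⟨hwu, h⟩)) hwv
  exact ⟨x, mem_insert_of_mem hx, hxw⟩

lemma osods_of_injective_guard {ι : Type*} {b c : ι → V} (hb : Function.Injective b)
    (hc : ∀ v ∉ S, ∃ i, c i = v) (hbS : ∀ i, b i ∈ S) (hbc : ∀ i, A (b i) (c i))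
    (hdom : ∀ i, ∃ u ∈ S.erase (b i), A u (b i)) : OSODS A S := by
  constructor
  · intro v hv
    obtain ⟨i, rfl⟩ := hc v hv
    exact ⟨b i, hbS i, hbc i⟩
  · intro v hv
    obtain ⟨i, rfl⟩ := hc v hv
    refine ⟨b i, hbS i, hbc i, outDom_insert_erase (hdom i) fun w hw hwi => ?_⟩
    obtain ⟨j, rfl⟩ := hc w hw
    have guard_ne : b j ≠ b i := hb.ne (ne_of_apply_ne c hwi)
    exact ⟨b j, mem_erase.2 ⟨guard_ne, hbS j⟩, hbc j⟩

variable [Fintype V]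

lemma IsPathPacking.osods_compl_image_last {ι : Type*} [Fintype ι] {P : ι → Fin 3 → V}
    (hP : IsPathPacking A P) : OSODS A (univ.image (P · 2))ᶜ := by
  have ne_of_ne {i j : ι} {r s : Fin 3} (hrs : r ≠ s) : P i r ≠ P j s :=
    hP.injective.ne (a₁ := (i, r)) (a₂ := (j, s)) fun h => hrs (congrArg Prod.snd h)
  have mem_of_ne_last (i : ι) {r : Fin 3} (hr : r ≠ 2) : P i r ∈ (univ.image (P · 2))ᶜ := by
    simpa using fun j => ne_of_ne (i := j) (j := i) hr.symm
  have middle_injective : Function.Injective (P · 1) :=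
    hP.injective.comp (Prod.mk_left_injective 1)
  refine osods_of_injective_guard middle_injective (c := (P · 2)) (fun v hv => by simpa using hv)
    (fun i => mem_of_ne_last i (by decide)) (fun i => hP.arc i 1) fun i => ?_
  exact ⟨P i 0, mem_erase.2 ⟨ne_of_ne (by decide), mem_of_ne_last i (by decide)⟩, hP.arc i 0⟩

lemma gammaOSO_le_card (hS : OSODS A S) : gammaOSO A ≤ #S :=
  Nat.sInf_le ⟨S, hS, rfl⟩

lemma IsPathPacking.gammaOSO_le_card_sub_card {ι : Type*} [Fintype ι] {P : ι → Fin 3 → V}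
    (hP : IsPathPacking A P) : gammaOSO A ≤ Fintype.card V - Fintype.card ι := by
  have last_injective : Function.Injective (P · 2) :=
    hP.injective.comp (Prod.mk_left_injective 2)
  calc gammaOSO A ≤ #(univ.image (P · 2))ᶜ := gammaOSO_le_card hP.osods_compl_image_last
    _ = Fintype.card V - Fintype.card ι := by
      rw [card_compl, card_image_of_injective _ last_injective, card_univ]

end

/-- `γ_oso(D) ≤ n − ⌊(l(D)+1)/3⌋`. -/
theorem stmt_8 [Fintype V] [DecidableEq V] (A : V → V → Prop) (hloop : ∀ v : V, ¬ A v v) :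
    gammaOSO A ≤ Fintype.card V - (longestPathLen A + 1) / 3 := by
  rcases isEmpty_or_nonempty V with hV | hV
  · have osods_empty : OSODS A ∅ := ⟨fun v => isEmptyElim v, fun v => isEmptyElim v⟩
    exact (gammaOSO_le_card osods_empty).trans (Nat.zero_le _)
  · obtain ⟨p, hp⟩ := exists_isDirectedPath_longestPathLen A
    obtain ⟨P, hP⟩ := hp.exists_isPathPacking (k := 2) (Nat.div_mul_le_self _ 3)
    simpa only [Fintype.card_fin] using hP.gammaOSO_le_card_sub_card
end

section
/- For the directed path P_n = (v₁, v₂, ..., v_n) with n ≥ 1 vertices, γ_os(P_n) = ⌈n/2⌉. -/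
/-!
An out-secure dominating set is out-dominating. The converse holds as soon as every vertex has at
most one out-neighbor: when a vertex `v` outside `S` replaces its in-neighbor `u`, the vertex `u`
is adjacent to `v`, and every other vertex outside `S` still has an in-neighbor in the new set,
since `v` is the only out-neighbor of `u`. Hence `γ_os = γ⁺` for such digraphs. In them each vertex
of an out-dominating set serves at most one vertex outside the set, so `|V| ≤ 2γ⁺`, and on the
directed path the `⌈n/2⌉` vertices `v₁, v₃, v₅, …` show that this is sharp.
-/

open Finset

variable {V : Type*}

section OutDomination

variable {A : V → V → Prop} {S : Finset V}

theorem OutDom.domG (hS : OutDom A S) : DomG A S := fun v hv =>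
  let ⟨u, huS, huv⟩ := hS v hv
  ⟨u, huS, Or.inl huv⟩

theorem OutDom.domG_insert_erase [DecidableEq V] (hA : Relator.RightUnique A) (hS : OutDom A S)
    {u v : V} (huv : A u v) : DomG A (insert v (S.erase u)) := by
  intro w hw
  rw [mem_insert, mem_erase, not_or, not_and] at hw
  obtain ⟨hwv, hwS⟩ := hw
  by_cases hwu : w = u
  · exact ⟨v, mem_insert_self _ _, Or.inr (hwu ▸ huv)⟩
  · obtain ⟨x, hxS, hxw⟩ := hS w (hwS hwu)
    have hxu : x ≠ u := fun hxu => hwv (hA hxw (hxu ▸ huv))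
    exact ⟨x, mem_insert_of_mem (mem_erase.2 ⟨hxu, hxS⟩), Or.inl hxw⟩

theorem OSDS.outDom [DecidableEq V] (hS : OSDS A S) : OutDom A S := fun v hv =>
  let ⟨u, huS, huv, _⟩ := hS.2 v hv
  ⟨u, huS, huv⟩

theorem OutDom.osds [DecidableEq V] (hA : Relator.RightUnique A) (hS : OutDom A S) : OSDS A S :=
  ⟨hS.domG, fun v hv =>
    let ⟨u, huS, huv⟩ := hS v hv
    ⟨u, huS, huv, hS.domG_insert_erase hA huv⟩⟩

theorem osds_iff_outDom [DecidableEq V] (hA : Relator.RightUnique A) : OSDS A S ↔ OutDom A S :=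
  ⟨OSDS.outDom, OutDom.osds hA⟩

theorem OutDom.card_le_two_mul_card [Fintype V] (hA : Relator.RightUnique A) (hS : OutDom A S) :
    Fintype.card V ≤ 2 * #S := by
  classical
  have hcompl : #Sᶜ ≤ #S :=
    card_le_card_of_forall_subsingleton (flip A) (fun v hv => hS v (mem_compl.1 hv))
      fun _ _ _ hv _ hw => hA hv.2 hw.2
  have hcard := card_add_card_compl S
  lia

variable [Fintype V]

theorem gammaOS_eq_gammaPlus [DecidableEq V] (hA : Relator.RightUnique A) :
    gammaOS A = gammaPlus A := by
  simp only [gammaOS, gammaPlus, osds_iff_outDom hA]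

theorem OutDom.gammaPlus_le_card (hS : OutDom A S) : gammaPlus A ≤ #S :=
  Nat.sInf_le ⟨S, hS, rfl⟩

variable (A) in
theorem exists_outDom_card_eq_gammaPlus : ∃ S : Finset V, OutDom A S ∧ #S = gammaPlus A :=
  by
  have huniv : OutDom A univ := fun v hv => absurd (mem_univ v) hv
  exact Nat.sInf_mem (s := {k | ∃ S : Finset V, OutDom A S ∧ #S = k}) ⟨_, univ, huniv, rfl⟩

theorem card_le_two_mul_gammaPlus (hA : Relator.RightUnique A) :
    Fintype.card V ≤ 2 * gammaPlus A := by
  obtain ⟨S, hS, hcard⟩ := exists_outDom_card_eq_gammaPlus A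
  exact hcard ▸ hS.card_le_two_mul_card hA

end OutDomination

section DirectedPath

theorem rightUnique_pathArc (n : ℕ) : Relator.RightUnique (pathArc n) := fun _ _ _ hv hw =>
  Fin.ext (hv.symm.trans hw)

theorem card_filter_val_eq_count (n : ℕ) (p : ℕ → Prop) [DecidablePred p] :
    #{i : Fin n | p i} = n.count p := by
  rw [Nat.count_eq_card_filter_range, ← Nat.Iio_eq_range, ← Fin.map_valEmbedding_univ, filter_map,
    card_map]
  rfl

theorem card_filter_dvd_val (n : ℕ) {r : ℕ} (hr : 0 < r) :
    #{i : Fin n | r ∣ (i : ℕ)} = ⌈(n : ℚ) / r⌉₊ := by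
  have hcount : (n.count (r ∣ ·) : ℤ) = ⌈(n : ℚ) / r⌉ := by
    simpa only [Nat.modEq_zero_iff_dvd, Nat.zero_mod, Nat.cast_zero, sub_zero] using
      Nat.count_modEq_card_eq_ceil n hr 0
  rw [card_filter_val_eq_count n (r ∣ ·), ← Int.ceil_toNat, ← hcount, Int.toNat_natCast]

/-- Vertices are numbered from `0`, so this is the set `{v₁, v₃, v₅, …}`. -/
theorem outDom_pathArc_filter_two_dvd (n : ℕ) :
    OutDom (pathArc n) {i : Fin n | 2 ∣ (i : ℕ)} := by
  intro v hv
  have hv_odd : ¬ 2 ∣ (v : ℕ) := by simpa using hv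
  have hpred : (v : ℕ) - 1 + 1 = v := by lia
  have hpred_even : 2 ∣ (v : ℕ) - 1 := by lia
  exact ⟨⟨v - 1, by lia⟩, mem_filter.2 ⟨mem_univ _, hpred_even⟩, hpred⟩

theorem gammaPlus_pathArc (n : ℕ) : gammaPlus (pathArc n) = ⌈(n : ℚ) / 2⌉₊ := by
  apply le_antisymm
  · exact (outDom_pathArc_filter_two_dvd n).gammaPlus_le_card.trans_eq
      (card_filter_dvd_val n two_pos)
  · have hn : (n : ℚ) ≤ 2 * gammaPlus (pathArc n) := by
      exact_mod_cast Fintype.card_fin n ▸ card_le_two_mul_gammaPlus (rightUnique_pathArc n)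
    exact Nat.ceil_le.2 ((div_le_iff₀' two_pos).2 hn)

end DirectedPath

/-- `γ_os(P_n) = ⌈n/2⌉`. -/
theorem stmt_15 (n : ℕ) (hn : 1 ≤ n) :
    gammaOS (pathArc n) = ⌈(n : ℚ) / 2⌉₊ := by
  rw [gammaOS_eq_gammaPlus (rightUnique_pathArc n), gammaPlus_pathArc]
end
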